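/- (Heins' characterization of finite Blaschke products) Let f be a nonconstant holomorphic function from the open unit disk 𝔻 into the closed unit disk such that lim_{|z| → 1⁻} (1 − |z|²) |f'(z)| / (1 − |f(z)|²) = 1. Then f is a finite Blaschke product, i.e. f(z) = η ∏_{j=1}^n (z_j − z)/(1 − conj(z_j) z) for some n ≥ 1, |η| = 1 and z_1, ..., z_n ∈ 𝔻. -/

import Mathlib

open Metric Filter

/-!
Follow `f` along a radius of the disk, parametrized by hyperbolic arc length `t`. The second-order
Schwarz–Pick inequality bounds the second derivative of `y = 1 / (1 - |f|²)` from below by `2c - 1`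
as long as the squared hyperbolic derivative of `f` is at least `c`. If `c > 1 / 2` near the unit
circle, then `y` grows quadratically in `t`, uniformly in the radius, so `|f| → 1` at the circle.
By Fatou's argument such an `f` is a finite Blaschke product. Dividing out a zero `a` multiplies
`|f p|` at a fixed point `p` by at least `1 / ρ > 1`, with `ρ` independent of `a`, while the
quotient is still bounded by `1`. So the division stops, and what is left is zero-free with boundary
modulus `1`; applying the maximum principle to it and to its inverse shows that it is constant.
-/

open Set Topology ComplexConjugate
open scoped InnerProductSpace

local notation "𝔻" => ball (0 : ℂ) 1

section UnitDisk

theorem eqOn_const_or_mapsTo_unitDisk {f : ℂ → ℂ} (hf : DifferentiableOn ℂ f 𝔻)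
    (hf_le : MapsTo f 𝔻 (closedBall 0 1)) : (∃ C, EqOn f (fun _ => C) 𝔻) ∨ MapsTo f 𝔻 𝔻 := by
  by_cases! hmax : ∃ c ∈ 𝔻, ‖f c‖ = 1
  · obtain ⟨c, hc, hfc⟩ := hmax
    refine .inl ⟨f c, Complex.eqOn_of_isPreconnected_of_isMaxOn_norm
      (convex_ball 0 1).isPreconnected isOpen_ball hf hc fun z hz => ?_⟩
    simpa [hfc] using hf_le hz
  · exact .inr fun z hz => mem_ball_zero_iff.2 <|
      (mem_closedBall_zero_iff.1 (hf_le hz)).lt_of_ne (hmax z hz)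

theorem mapsTo_unitDisk_of_nonconst {f : ℂ → ℂ} (hf : DifferentiableOn ℂ f 𝔻)
    (hf_le : MapsTo f 𝔻 (closedBall 0 1)) (hf_nc : ∃ z ∈ 𝔻, ∃ w ∈ 𝔻, f z ≠ f w) :
    MapsTo f 𝔻 𝔻 := by
  obtain ⟨z, hz, w, hw, hne⟩ := hf_nc
  exact (eqOn_const_or_mapsTo_unitDisk hf hf_le).resolve_left
    fun ⟨C, hC⟩ => hne ((hC hz).trans (hC hw).symm)

theorem one_sub_norm_sq_pos {E : Type*} [SeminormedAddGroup E] {a : E} (ha : a ∈ ball 0 1) :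
    0 < 1 - ‖a‖ ^ 2 := by
  have := mem_ball_zero_iff.1 ha
  nlinarith [norm_nonneg a]

theorem norm_one_sub_norm_sq {a : ℂ} (ha : a ∈ 𝔻) : ‖1 - (‖a‖ : ℂ) ^ 2‖ = 1 - ‖a‖ ^ 2 := by
  exact_mod_cast Complex.norm_of_nonneg (one_sub_norm_sq_pos ha).le

/-- The automorphism of the unit disk that exchanges `0` and `a`, for `‖a‖ < 1`. -/
noncomputable def blaschkeFactor (a z : ℂ) : ℂ := (a - z) / (1 - conj a * z)

variable {a z : ℂ}

theorem blaschkeFactor_zero (a : ℂ) : blaschkeFactor a 0 = a := by simp [blaschkeFactor]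

theorem blaschkeFactor_self (a : ℂ) : blaschkeFactor a a = 0 := by simp [blaschkeFactor]

theorem one_sub_norm_le_norm_one_sub_conj_mul (hz : z ∈ 𝔻) :
    1 - ‖a‖ ≤ ‖1 - conj a * z‖ := by
  have h := norm_sub_norm_le 1 (conj a * z)
  rw [norm_one, norm_mul, RCLike.norm_conj] at h
  nlinarith [norm_nonneg a, mem_ball_zero_iff.1 hz]

theorem one_sub_conj_mul_ne_zero (ha : a ∈ 𝔻) (hz : z ∈ 𝔻) : 1 - conj a * z ≠ 0 :=
  norm_pos_iff.1 <| (sub_pos.2 (mem_ball_zero_iff.1 ha)).trans_le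
    (one_sub_norm_le_norm_one_sub_conj_mul hz)

theorem one_sub_norm_sq_blaschkeFactor (h : 1 - conj a * z ≠ 0) :
    1 - ‖blaschkeFactor a z‖ ^ 2 =
      (1 - ‖a‖ ^ 2) * (1 - ‖z‖ ^ 2) / ‖1 - conj a * z‖ ^ 2 := by
  have h' : ‖1 - conj a * z‖ ≠ 0 := norm_ne_zero_iff.2 h
  have hid : ‖1 - conj a * z‖ ^ 2 - ‖a - z‖ ^ 2 = (1 - ‖a‖ ^ 2) * (1 - ‖z‖ ^ 2) := by
    simp only [← Complex.normSq_eq_norm_sq, Complex.normSq_apply, Complex.sub_re, Complex.sub_im,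
      Complex.mul_re, Complex.mul_im, Complex.conj_re, Complex.conj_im, Complex.one_re,
      Complex.one_im]
    ring
  rw [blaschkeFactor, norm_div, div_pow, ← hid, sub_div, div_self (pow_ne_zero 2 h')]

theorem mapsTo_blaschkeFactor (ha : a ∈ 𝔻) : MapsTo (blaschkeFactor a) 𝔻 𝔻 := by
  intro z hz
  have hne := one_sub_conj_mul_ne_zero ha hz
  have hpos : 0 < 1 - ‖blaschkeFactor a z‖ ^ 2 := by
    have := one_sub_norm_sq_pos ha
    have := one_sub_norm_sq_pos hz
    rw [one_sub_norm_sq_blaschkeFactor hne]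
    positivity
  rw [mem_ball_zero_iff, ← sq_lt_one_iff₀ (norm_nonneg _)]
  linarith

theorem hasDerivAt_blaschkeFactor (h : 1 - conj a * z ≠ 0) :
    HasDerivAt (blaschkeFactor a) (-(1 - (‖a‖ : ℂ) ^ 2) / (1 - conj a * z) ^ 2) z := by
  refine (((hasDerivAt_id z).const_sub a).div
    (((hasDerivAt_id z).const_mul (conj a)).const_sub 1) h).congr_deriv ?_
  rw [← Complex.conj_mul', id]
  ring

theorem iteratedDeriv_two_blaschkeFactor (h : 1 - conj a * z ≠ 0) :
    iteratedDeriv 2 (blaschkeFactor a) z =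
      -(2 * conj a * (1 - (‖a‖ : ℂ) ^ 2)) / (1 - conj a * z) ^ 3 := by
  have hne : ∀ᶠ w in 𝓝 z, 1 - conj a * w ≠ 0 :=
    (show Continuous fun w => 1 - conj a * w by fun_prop).continuousAt.eventually_ne h
  have hderiv : deriv (blaschkeFactor a) =ᶠ[𝓝 z]
      fun w => -(1 - (‖a‖ : ℂ) ^ 2) / (1 - conj a * w) ^ 2 :=
    hne.mono fun w hw => (hasDerivAt_blaschkeFactor hw).deriv
  rw [iteratedDeriv_succ, iteratedDeriv_one, hderiv.deriv_eq]
  refine HasDerivAt.deriv <| ((hasDerivAt_const z (-(1 - (‖a‖ : ℂ) ^ 2))).div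
    ((((hasDerivAt_id z).const_mul (conj a)).const_sub 1).pow 2) (pow_ne_zero 2 h)).congr_deriv ?_
  simp only [id, Pi.pow_apply]
  field_simp
  ring

theorem differentiableOn_blaschkeFactor (ha : a ∈ 𝔻) : DifferentiableOn ℂ (blaschkeFactor a) 𝔻 :=
  fun _ hz => (hasDerivAt_blaschkeFactor
    (one_sub_conj_mul_ne_zero ha hz)).differentiableAt.differentiableWithinAt

theorem contDiffAt_blaschkeFactor (h : 1 - conj a * z ≠ 0) {n : WithTop ℕ∞} :
    ContDiffAt ℂ n (blaschkeFactor a) z := by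
  unfold blaschkeFactor
  fun_prop (disch := assumption)

theorem deriv_blaschkeFactor_self (ha : a ∈ 𝔻) :
    deriv (blaschkeFactor a) a = -(1 - (‖a‖ : ℂ) ^ 2)⁻¹ := by
  rw [(hasDerivAt_blaschkeFactor (one_sub_conj_mul_ne_zero ha ha)).deriv, Complex.conj_mul',
    neg_div, sq (1 - (‖a‖ : ℂ) ^ 2), div_self_mul_self']

theorem iteratedDeriv_two_blaschkeFactor_self (ha : a ∈ 𝔻) :
    iteratedDeriv 2 (blaschkeFactor a) a = -(2 * conj a) / (1 - (‖a‖ : ℂ) ^ 2) ^ 2 := by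
  have h := one_sub_conj_mul_ne_zero ha ha
  rw [iteratedDeriv_two_blaschkeFactor h]
  rw [Complex.conj_mul'] at h ⊢
  field_simp

end UnitDisk

section SchwarzPick

variable {f : ℂ → ℂ}

theorem norm_deriv_zero_le_one_sub_norm_sq (hf : DifferentiableOn ℂ f 𝔻)
    (hf_le : MapsTo f 𝔻 (closedBall 0 1)) : ‖deriv f 0‖ ≤ 1 - ‖f 0‖ ^ 2 := by
  have h0 : (0 : ℂ) ∈ 𝔻 := mem_ball_self one_pos
  obtain ⟨C, hC⟩ | hmaps := eqOn_const_or_mapsTo_unitDisk hf hf_le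
  · have hderiv : deriv f 0 = 0 :=
      (hC.eventuallyEq_of_mem (isOpen_ball.mem_nhds h0)).deriv_eq.trans (deriv_const 0 C)
    simpa [hderiv] using hf_le h0
  · have hf0 := hmaps h0
    have hq := one_sub_norm_sq_pos hf0
    have hderiv : deriv (blaschkeFactor (f 0) ∘ f) 0 = -(1 - (‖f 0‖ : ℂ) ^ 2)⁻¹ * deriv f 0 := by
      rw [deriv_comp 0 (contDiffAt_blaschkeFactor (one_sub_conj_mul_ne_zero hf0 hf0)
        (n := 1)).differentiableAt_one (hf.differentiableAt (isOpen_ball.mem_nhds h0)),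
        deriv_blaschkeFactor_self hf0]
    have hschwarz : ‖deriv (blaschkeFactor (f 0) ∘ f) 0‖ ≤ 1 := by
      refine Complex.norm_deriv_le_one_of_mapsTo_ball
        ((differentiableOn_blaschkeFactor hf0).comp hf hmaps) ?_ one_pos
      rw [Function.comp_apply, blaschkeFactor_self]
      exact ((mapsTo_blaschkeFactor hf0).comp hmaps).mono_right ball_subset_closedBall
    rwa [hderiv, norm_mul, norm_neg, norm_inv, norm_one_sub_norm_sq hf0, inv_mul_le_one₀ hq]
      at hschwarz

theorem norm_iteratedDeriv_two_zero_le_of_map_zero (hf : DifferentiableOn ℂ f 𝔻)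
    (hf_le : MapsTo f 𝔻 (closedBall 0 1)) (hf0 : f 0 = 0) :
    ‖iteratedDeriv 2 f 0‖ ≤ 2 * (1 - ‖deriv f 0‖ ^ 2) := by
  have h0 : 𝔻 ∈ 𝓝 (0 : ℂ) := ball_mem_nhds 0 one_pos
  set k := dslope f 0
  have hk : DifferentiableOn ℂ k 𝔻 := (Complex.differentiableOn_dslope h0).2 hf
  have hk_le : MapsTo k 𝔻 (closedBall 0 1) := fun z hz => by
    simpa using Complex.norm_dslope_le_div_of_mapsTo_ball hf (by rwa [hf0]) hz
  have hfk : f = fun z => z * k z := by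
    funext z
    simpa [hf0] using (sub_smul_dslope f 0 z).symm
  have hderiv : deriv f =ᶠ[𝓝 0] fun z => k z + z * deriv k z := by
    filter_upwards [h0] with z hz
    have hkz := (hk.differentiableAt (isOpen_ball.mem_nhds hz)).hasDerivAt
    rw [hfk]
    exact (((hasDerivAt_id z).fun_mul hkz).congr_deriv (by rw [id, one_mul])).deriv
  have hderiv₂ : iteratedDeriv 2 f 0 = 2 * deriv k 0 := by
    have hk0 := (hk.differentiableAt h0).hasDerivAt
    have hk0' := ((hk.deriv isOpen_ball).differentiableAt h0).hasDerivAt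
    rw [iteratedDeriv_succ, iteratedDeriv_one, hderiv.deriv_eq, two_mul]
    exact ((hk0.fun_add ((hasDerivAt_id 0).fun_mul hk0')).congr_deriv (by simp)).deriv
  have hk0 : k 0 = deriv f 0 := dslope_same f 0
  rw [hderiv₂, norm_mul, Complex.norm_two, ← hk0]
  gcongr
  exact norm_deriv_zero_le_one_sub_norm_sq hk hk_le

theorem norm_iteratedDeriv_two_zero_le (hf : DifferentiableOn ℂ f 𝔻) (hmaps : MapsTo f 𝔻 𝔻) :
    ‖(1 - (‖f 0‖ : ℂ) ^ 2) * iteratedDeriv 2 f 0 + 2 * conj (f 0) * deriv f 0 ^ 2‖ ≤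
      2 * ((1 - ‖f 0‖ ^ 2) ^ 2 - ‖deriv f 0‖ ^ 2) := by
  have h0 : (0 : ℂ) ∈ 𝔻 := mem_ball_self one_pos
  have hb : f 0 ∈ 𝔻 := hmaps h0
  set b := f 0
  have hq := one_sub_norm_sq_pos hb
  have hq' : 1 - (‖b‖ : ℂ) ^ 2 ≠ 0 := by exact_mod_cast hq.ne'
  have hfz : ContDiffAt ℂ 2 f 0 := (hf.analyticAt (isOpen_ball.mem_nhds h0)).contDiffAt
  have hB : ContDiffAt ℂ 2 (blaschkeFactor b) b :=
    contDiffAt_blaschkeFactor (one_sub_conj_mul_ne_zero hb hb)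
  have hpick := norm_iteratedDeriv_two_zero_le_of_map_zero
    ((differentiableOn_blaschkeFactor hb).comp hf hmaps)
    (((mapsTo_blaschkeFactor hb).comp hmaps).mono_right ball_subset_closedBall)
    (blaschkeFactor_self b)
  rw [iteratedDeriv_comp_two hB hfz, deriv_comp 0 (hB.differentiableAt two_ne_zero)
    (hfz.differentiableAt two_ne_zero), deriv_blaschkeFactor_self hb,
    iteratedDeriv_two_blaschkeFactor_self hb] at hpick
  have hfactor : -(2 * conj b) / (1 - (‖b‖ : ℂ) ^ 2) ^ 2 * deriv f 0 ^ 2 +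
      -(1 - (‖b‖ : ℂ) ^ 2)⁻¹ * iteratedDeriv 2 f 0 =
      -((1 - (‖b‖ : ℂ) ^ 2) * iteratedDeriv 2 f 0 + 2 * conj b * deriv f 0 ^ 2) /
        (1 - (‖b‖ : ℂ) ^ 2) ^ 2 := by
    field_simp
    ring
  rw [hfactor, norm_div, norm_neg, norm_mul, norm_neg, norm_inv, norm_pow,
    norm_one_sub_norm_sq hb, div_le_iff₀ (by positivity)] at hpick
  refine hpick.trans_eq ?_
  field_simp

/-- Peschl's first invariant derivative of `f`: the derivative at `w = 0` of
`f ((z + w) / (1 + conj z * w))`. -/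
noncomputable def peschlDeriv (f : ℂ → ℂ) (z : ℂ) : ℂ := (1 - (‖z‖ : ℂ) ^ 2) * deriv f z

/-- Peschl's second invariant derivative of `f`: the second derivative at `w = 0` of
`f ((z + w) / (1 + conj z * w))`. -/
noncomputable def peschlDeriv₂ (f : ℂ → ℂ) (z : ℂ) : ℂ :=
  (1 - (‖z‖ : ℂ) ^ 2) ^ 2 * iteratedDeriv 2 f z - 2 * conj z * peschlDeriv f z

variable {z : ℂ}

theorem deriv_comp_blaschkeFactor_zero (hf : DifferentiableAt ℂ f z) :
    deriv (f ∘ blaschkeFactor z) 0 = -peschlDeriv f z := by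
  have hB := hasDerivAt_blaschkeFactor (a := z) (z := 0) (by simp)
  rw [deriv_comp _ (by rwa [blaschkeFactor_zero]) hB.differentiableAt, blaschkeFactor_zero,
    hB.deriv, peschlDeriv]
  ring

theorem iteratedDeriv_two_comp_blaschkeFactor_zero (hf : ContDiffAt ℂ 2 f z) :
    iteratedDeriv 2 (f ∘ blaschkeFactor z) 0 = peschlDeriv₂ f z := by
  have h0 : 1 - conj z * 0 ≠ 0 := by simp
  rw [iteratedDeriv_comp_two (by rwa [blaschkeFactor_zero]) (contDiffAt_blaschkeFactor h0),
    iteratedDeriv_two_blaschkeFactor h0, (hasDerivAt_blaschkeFactor h0).deriv, blaschkeFactor_zero,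
    peschlDeriv₂, peschlDeriv]
  ring

theorem norm_peschlDeriv₂_le (hf : DifferentiableOn ℂ f 𝔻) (hmaps : MapsTo f 𝔻 𝔻)
    (hz : z ∈ 𝔻) :
    ‖(1 - (‖f z‖ : ℂ) ^ 2) * peschlDeriv₂ f z + 2 * conj (f z) * peschlDeriv f z ^ 2‖ ≤
      2 * ((1 - ‖f z‖ ^ 2) ^ 2 - ‖peschlDeriv f z‖ ^ 2) := by
  have hfz : ContDiffAt ℂ 2 f z := (hf.analyticAt (isOpen_ball.mem_nhds hz)).contDiffAt
  simpa [deriv_comp_blaschkeFactor_zero (hfz.differentiableAt two_ne_zero),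
    iteratedDeriv_two_comp_blaschkeFactor_zero hfz, blaschkeFactor_zero] using
    norm_iteratedDeriv_two_zero_le (hf.comp (differentiableOn_blaschkeFactor hz)
      (mapsTo_blaschkeFactor hz)) (hmaps.comp (mapsTo_blaschkeFactor hz))

theorem norm_peschlDeriv_le (hf : DifferentiableOn ℂ f 𝔻) (hmaps : MapsTo f 𝔻 𝔻)
    (hz : z ∈ 𝔻) : ‖peschlDeriv f z‖ ≤ 1 - ‖f z‖ ^ 2 := by
  have := (norm_nonneg _).trans (norm_peschlDeriv₂_le hf hmaps hz)
  exact le_of_sq_le_sq (by linarith) (one_sub_norm_sq_pos (hmaps hz)).le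

/-- The hyperbolic derivative of a self-map of the unit disk, that is, the factor by which it
scales the hyperbolic metric; it takes the junk value `0` where `|f z| = 1`. -/
noncomputable def hyperbolicDeriv (f : ℂ → ℂ) (z : ℂ) : ℝ :=
  (1 - ‖z‖ ^ 2) * ‖deriv f z‖ / (1 - ‖f z‖ ^ 2)

theorem norm_peschlDeriv (hz : z ∈ 𝔻) (hfz : f z ∈ 𝔻) :
    ‖peschlDeriv f z‖ = hyperbolicDeriv f z * (1 - ‖f z‖ ^ 2) := by
  rw [peschlDeriv, norm_mul, norm_one_sub_norm_sq hz, hyperbolicDeriv,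
    div_mul_cancel₀ _ (one_sub_norm_sq_pos hfz).ne']

end SchwarzPick

section RealCalculus

theorem hasDerivAt_tanh (t : ℝ) : HasDerivAt Real.tanh (1 - Real.tanh t ^ 2) t := by
  have hcosh := (Real.cosh_pos t).ne'
  rw [Real.tanh_eq_sinh_div_cosh t, funext Real.tanh_eq_sinh_div_cosh]
  refine ((Real.hasDerivAt_sinh t).div (Real.hasDerivAt_cosh t) hcosh).congr_deriv ?_
  field_simp

theorem monotone_tanh : Monotone Real.tanh :=
  monotone_of_hasDerivAt_nonneg hasDerivAt_tanh fun t => sub_nonneg.2 (Real.tanh_sq_lt_one t).le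

theorem tendsto_artanh_atTop : Tendsto Real.artanh (𝓝[<] 1) atTop := by
  refine tendsto_atTop.2 fun t => ?_
  filter_upwards [Ioo_mem_nhdsLT (Real.tanh_lt_one t)] with r hr
  rw [← Real.artanh_tanh t]
  exact Real.artanh_le_artanh (Real.neg_one_lt_tanh t) hr.2 hr.1.le

theorem le_of_hasDerivAt_le {u u' v v' : ℝ → ℝ} {a t : ℝ} (hu : ∀ s ≥ a, HasDerivAt u (u' s) s)
    (hv : ∀ s ≥ a, HasDerivAt v (v' s) s) (hle : ∀ s ≥ a, u' s ≤ v' s) (ha : u a ≤ v a)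
    (ht : a ≤ t) : u t ≤ v t :=
  image_le_of_deriv_right_le_deriv_boundary
    (fun s hs => (hu s hs.1).continuousAt.continuousWithinAt)
    (fun s hs => (hu s hs.1).hasDerivWithinAt) ha
    (fun s hs => (hv s hs.1).continuousAt.continuousWithinAt)
    (fun s hs => (hv s hs.1).hasDerivWithinAt) (fun s hs => hle s hs.1) (right_mem_Icc.2 ht)

theorem quadratic_le_of_le_second_deriv {y y' y'' : ℝ → ℝ} {a t ε : ℝ}
    (hy : ∀ s ≥ a, HasDerivAt y (y' s) s) (hy' : ∀ s ≥ a, HasDerivAt y' (y'' s) s)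
    (hε : ∀ s ≥ a, ε ≤ y'' s) (ht : a ≤ t) :
    y a + y' a * (t - a) + ε / 2 * (t - a) ^ 2 ≤ y t := by
  have hlin (s : ℝ) : HasDerivAt (fun s => y' a + ε * (s - a)) ε s := by
    simpa using (((hasDerivAt_id s).sub_const a).const_mul ε).const_add (y' a)
  have hquad (s : ℝ) : HasDerivAt (fun s => y a + y' a * (s - a) + ε / 2 * (s - a) ^ 2)
      (y' a + ε * (s - a)) s := by
    have hsub := (hasDerivAt_id s).sub_const a
    refine (((hsub.const_mul (y' a)).const_add (y a)).fun_add
      ((hsub.fun_pow 2).const_mul (ε / 2))).congr_deriv ?_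
    simp only [id, mul_one, Nat.cast_ofNat, Nat.add_one_sub_one, pow_one]
    ring
  have hy'_ge (s : ℝ) (hs : s ≥ a) : y' a + ε * (s - a) ≤ y' s :=
    le_of_hasDerivAt_le (fun r _ => hlin r) hy' hε (by simp) hs
  exact le_of_hasDerivAt_le (fun s _ => hquad s) hy hy'_ge (by simp) ht

end RealCalculus

section InvOneSubNormSq

variable {E : Type*} [NormedAddCommGroup E] [InnerProductSpace ℝ E] {g g' : ℝ → E} {t : ℝ}

theorem hasDerivAt_inv_one_sub_norm_sq {v : E} (hg : HasDerivAt g v t) (hgt : 1 - ‖g t‖ ^ 2 ≠ 0) :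
    HasDerivAt (fun s => (1 - ‖g s‖ ^ 2)⁻¹) (2 * ⟪g t, v⟫_ℝ / (1 - ‖g t‖ ^ 2) ^ 2) t :=
  ((hg.norm_sq.const_sub 1).fun_inv hgt).congr_deriv (by rw [neg_neg])

theorem hasDerivAt_inner_div_one_sub_norm_sq {w : E} (hg : HasDerivAt g (g' t) t)
    (hg' : HasDerivAt g' w t) (hgt : 1 - ‖g t‖ ^ 2 ≠ 0) :
    HasDerivAt (fun s => 2 * ⟪g s, g' s⟫_ℝ / (1 - ‖g s‖ ^ 2) ^ 2)
      ((2 * (‖g' t‖ ^ 2 + ⟪g t, w⟫_ℝ) * (1 - ‖g t‖ ^ 2) + 8 * ⟪g t, g' t⟫_ℝ ^ 2) /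
        (1 - ‖g t‖ ^ 2) ^ 3) t := by
  refine (((hg.inner ℝ hg').const_mul 2).fun_div ((hg.norm_sq.const_sub 1).fun_pow 2)
    (pow_ne_zero 2 hgt)).congr_deriv ?_
  rw [real_inner_self_eq_norm_sq]
  field_simp
  ring

theorem neg_two_mul_inv_le_two_mul_inner_div {b v : E} (hb : b ∈ ball 0 1)
    (hv : ‖v‖ ≤ 1 - ‖b‖ ^ 2) :
    -2 * (1 - ‖b‖ ^ 2)⁻¹ ≤ 2 * ⟪b, v⟫_ℝ / (1 - ‖b‖ ^ 2) ^ 2 := by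
  have hq := one_sub_norm_sq_pos hb
  have hinner : -(1 - ‖b‖ ^ 2) ≤ ⟪b, v⟫_ℝ := neg_le_of_abs_le <|
    (abs_real_inner_le_norm b v).trans <|
      (mul_le_of_le_one_left (norm_nonneg v) (mem_ball_zero_iff.1 hb).le).trans hv
  calc -2 * (1 - ‖b‖ ^ 2)⁻¹ = 2 * -(1 - ‖b‖ ^ 2) / (1 - ‖b‖ ^ 2) ^ 2 := by field_simp
    _ ≤ 2 * ⟪b, v⟫_ℝ / (1 - ‖b‖ ^ 2) ^ 2 := by gcongr

end InvOneSubNormSq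

section HyperbolicGeodesics

variable {f : ℂ → ℂ} {ζ : ℂ}

theorem norm_mul_tanh (hζ : ‖ζ‖ = 1) (t : ℝ) : ‖ζ * Real.tanh t‖ = |Real.tanh t| := by
  rw [norm_mul, hζ, one_mul, Complex.norm_real, Real.norm_eq_abs]

theorem mul_tanh_mem_unitDisk (hζ : ‖ζ‖ = 1) (t : ℝ) : ζ * Real.tanh t ∈ 𝔻 := by
  rw [mem_ball_zero_iff, norm_mul_tanh hζ]
  exact Real.abs_tanh_lt_one t

theorem hasDerivAt_comp_mul_tanh {g : ℂ → ℂ} {g' : ℂ} {t : ℝ}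
    (hg : HasDerivAt g g' (ζ * Real.tanh t)) :
    HasDerivAt (fun s : ℝ => g (ζ * Real.tanh s)) (ζ * (1 - Real.tanh t ^ 2) * g') t := by
  have htanh := ((hasDerivAt_tanh t).ofReal_comp).const_mul ζ
  refine (hg.comp_of_eq t htanh rfl).congr_deriv ?_
  push_cast
  ring

theorem hasDerivAt_comp_mul_tanh_peschlDeriv (hf : DifferentiableOn ℂ f 𝔻) (hζ : ‖ζ‖ = 1) (t : ℝ) :
    HasDerivAt (fun s : ℝ => f (ζ * Real.tanh s)) (ζ * peschlDeriv f (ζ * Real.tanh t)) t := by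
  refine (hasDerivAt_comp_mul_tanh (hf.differentiableAt
    (isOpen_ball.mem_nhds (mul_tanh_mem_unitDisk hζ t))).hasDerivAt).congr_deriv ?_
  rw [peschlDeriv, norm_mul_tanh hζ, ← Complex.ofReal_pow |_|, sq_abs, Complex.ofReal_pow]
  ring

theorem hasDerivAt_comp_mul_tanh_peschlDeriv₂ (hf : DifferentiableOn ℂ f 𝔻) (hζ : ‖ζ‖ = 1) (t : ℝ) :
    HasDerivAt (fun s : ℝ => ζ * peschlDeriv f (ζ * Real.tanh s))
      (ζ ^ 2 * peschlDeriv₂ f (ζ * Real.tanh t)) t := by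
  have hsq (s : ℝ) : (‖ζ * Real.tanh s‖ : ℂ) ^ 2 = (Real.tanh s : ℂ) ^ 2 := by
    rw [norm_mul_tanh hζ, ← Complex.ofReal_pow |_|, sq_abs, Complex.ofReal_pow]
  have hderiv := hasDerivAt_comp_mul_tanh ((hf.deriv isOpen_ball).differentiableAt
    (isOpen_ball.mem_nhds (mul_tanh_mem_unitDisk hζ t))).hasDerivAt
  have hζζ : ζ * conj ζ = 1 := by rw [Complex.mul_conj', hζ]; norm_num
  simp only [peschlDeriv, hsq, peschlDeriv₂, iteratedDeriv_succ, iteratedDeriv_zero]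
  refine ((((hasDerivAt_tanh t).ofReal_comp.fun_pow 2).const_sub 1).fun_mul hderiv
    |>.const_mul ζ).congr_deriv ?_
  simp only [map_mul, Complex.conj_ofReal, Complex.ofReal_sub, Complex.ofReal_one,
    Complex.ofReal_pow, Nat.cast_ofNat, Nat.add_one_sub_one, pow_one]
  linear_combination (2 * ζ * Real.tanh t * (1 - Real.tanh t ^ 2) * deriv f (ζ * Real.tanh t)) * hζζ

/- Read `b`, `u`, `w` as the value and the first two derivatives of a self-map of the disk along a
unit-speed geodesic: `hw` is then the second-order Schwarz–Pick inequality, and the right-hand side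
is the second derivative of `1 / (1 - |f|²)`. -/
theorem le_second_deriv_of_schwarzPick {b u w : ℂ} {c : ℝ} (hb : b ∈ 𝔻) (hc : 1 / 2 < c)
    (hu : c * (1 - ‖b‖ ^ 2) ^ 2 ≤ ‖u‖ ^ 2)
    (hw : ‖(1 - (‖b‖ : ℂ) ^ 2) * w + 2 * conj b * u ^ 2‖ ≤ 2 * ((1 - ‖b‖ ^ 2) ^ 2 - ‖u‖ ^ 2)) :
    2 * c - 1 ≤ (2 * (‖u‖ ^ 2 + ⟪b, w⟫_ℝ) * (1 - ‖b‖ ^ 2) + 8 * ⟪b, u⟫_ℝ ^ 2) /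
        (1 - ‖b‖ ^ 2) ^ 3 := by
  have hq := one_sub_norm_sq_pos hb
  set A := (1 - (‖b‖ : ℂ) ^ 2) * w + 2 * conj b * u ^ 2 with hA
  have hAb : -(‖b‖ * ‖A‖) ≤ ⟪b, A⟫_ℝ := (abs_le.1 (abs_real_inner_le_norm b A)).1
  have hid : 2 * (‖u‖ ^ 2 + ⟪b, w⟫_ℝ) * (1 - ‖b‖ ^ 2) + 8 * ⟪b, u⟫_ℝ ^ 2 =
      2 * ‖u‖ ^ 2 * (1 + ‖b‖ ^ 2) + 2 * ⟪b, A⟫_ℝ := by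
    rw [hA]
    simp only [Complex.inner, ← Complex.ofReal_pow, Complex.sq_norm, Complex.normSq_apply, sq u,
      Complex.mul_re, Complex.mul_im, Complex.conj_re, Complex.conj_im, Complex.add_re,
      Complex.add_im, Complex.sub_re, Complex.sub_im, Complex.one_re, Complex.one_im,
      Complex.ofReal_re, Complex.ofReal_im, Complex.re_ofNat, Complex.im_ofNat]
    ring
  rw [le_div_iff₀ (by positivity), hid]
  calc (2 * c - 1) * (1 - ‖b‖ ^ 2) ^ 3
      ≤ (2 * c - 1) * (1 - ‖b‖ ^ 2) ^ 2 := by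
        refine mul_le_mul_of_nonneg_left (pow_le_pow_of_le_one hq.le ?_ (by norm_num)) (by linarith)
        linarith [sq_nonneg ‖b‖]
    _ ≤ (2 * c * (1 + ‖b‖) ^ 2 - 4 * ‖b‖) * (1 - ‖b‖ ^ 2) ^ 2 := by
        refine mul_le_mul_of_nonneg_right ?_ (sq_nonneg _)
        nlinarith [norm_nonneg b, sq_nonneg (1 - ‖b‖),
          mul_nonneg (sub_nonneg.2 hc.le) (norm_nonneg b), sq_nonneg ‖b‖]
    _ ≤ 2 * ‖u‖ ^ 2 * (1 + ‖b‖) ^ 2 - 4 * ‖b‖ * (1 - ‖b‖ ^ 2) ^ 2 := by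
        linarith [mul_le_mul_of_nonneg_left hu (sq_nonneg (1 + ‖b‖))]
    _ = 2 * ‖u‖ ^ 2 * (1 + ‖b‖ ^ 2) - 2 * (‖b‖ * (2 * ((1 - ‖b‖ ^ 2) ^ 2 - ‖u‖ ^ 2))) := by ring
    _ ≤ 2 * ‖u‖ ^ 2 * (1 + ‖b‖ ^ 2) - 2 * (‖b‖ * ‖A‖) := by gcongr
    _ ≤ 2 * ‖u‖ ^ 2 * (1 + ‖b‖ ^ 2) + 2 * ⟪b, A⟫_ℝ := by linarith

theorem quadratic_le_inv_one_sub_norm_sq_comp_mul_tanh (hf : DifferentiableOn ℂ f 𝔻)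
    (hmaps : MapsTo f 𝔻 𝔻) {c t₀ t : ℝ} (hc : 1 / 2 < c) (hζ : ‖ζ‖ = 1)
    (h : ∀ s ≥ t₀, c ≤ hyperbolicDeriv f (ζ * Real.tanh s) ^ 2) (ht : t₀ ≤ t) :
    (1 - ‖f (ζ * Real.tanh t₀)‖ ^ 2)⁻¹ * (1 - 2 * (t - t₀)) + (c - 1 / 2) * (t - t₀) ^ 2 ≤
      (1 - ‖f (ζ * Real.tanh t)‖ ^ 2)⁻¹ := by
  set g : ℝ → ℂ := fun s => f (ζ * Real.tanh s)
  set g' : ℝ → ℂ := fun s => ζ * peschlDeriv f (ζ * Real.tanh s)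
  have hz (s : ℝ) : ζ * Real.tanh s ∈ 𝔻 := mul_tanh_mem_unitDisk hζ s
  have hgs (s : ℝ) : g s ∈ 𝔻 := hmaps (hz s)
  have hq (s : ℝ) : 0 < 1 - ‖g s‖ ^ 2 := one_sub_norm_sq_pos (hgs s)
  have hg (s : ℝ) : HasDerivAt g (g' s) s := hasDerivAt_comp_mul_tanh_peschlDeriv hf hζ s
  have hg' (s : ℝ) := hasDerivAt_comp_mul_tanh_peschlDeriv₂ hf hζ s
  have hg'_norm (s : ℝ) : ‖g' s‖ = ‖peschlDeriv f (ζ * Real.tanh s)‖ := by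
    rw [norm_mul, hζ, one_mul]
  have hgrowth := quadratic_le_of_le_second_deriv
    (fun s _ => hasDerivAt_inv_one_sub_norm_sq (hg s) (hq s).ne')
    (fun s _ => hasDerivAt_inner_div_one_sub_norm_sq (hg s) (hg' s) (hq s).ne')
    (fun s hs => le_second_deriv_of_schwarzPick (hgs s) hc ?_ ?_) ht
  · have hslope := neg_two_mul_inv_le_two_mul_inner_div (hgs t₀)
      ((hg'_norm t₀).trans_le (norm_peschlDeriv_le hf hmaps (hz t₀)))
    nlinarith [mul_le_mul_of_nonneg_right hslope (sub_nonneg.2 ht)]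
  · rw [hg'_norm, norm_peschlDeriv (hz s) (hgs s), mul_pow]
    exact mul_le_mul_of_nonneg_right (h s hs) (sq_nonneg _)
  · have hrot (q b u w : ℂ) : q * (ζ ^ 2 * w) + b * (ζ * u) ^ 2 = ζ ^ 2 * (q * w + b * u ^ 2) := by
      ring
    rw [hg'_norm, hrot, norm_mul, norm_pow, hζ, one_pow, one_mul]
    exact norm_peschlDeriv₂_le hf hmaps (hz s)

end HyperbolicGeodesics

section Boundary

/-- The filter of the limits `|z| → 1⁻`. -/
noncomputable abbrev atUnitCircle : Filter ℂ := comap (fun z => ‖z‖) (𝓝[<] 1)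

theorem hasBasis_atUnitCircle :
    atUnitCircle.HasBasis (· < 1) fun r => (fun z => ‖z‖) ⁻¹' Ioo r 1 :=
  (nhdsLT_basis 1).comap _

instance : atUnitCircle.NeBot := by
  refine hasBasis_atUnitCircle.neBot_iff.2 fun {r} hr => ?_
  obtain ⟨x, hx, hx1⟩ := exists_between (max_lt hr one_pos)
  refine ⟨(x : ℂ), ?_⟩
  rw [mem_preimage, Complex.norm_of_nonneg ((le_max_right _ _).trans hx.le)]
  exact ⟨(le_max_left _ _).trans_lt hx, hx1⟩

theorem eventually_mem_unitDisk : ∀ᶠ z in atUnitCircle, z ∈ 𝔻 :=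
  hasBasis_atUnitCircle.eventually_iff.2 ⟨0, one_pos, fun _ hz => mem_ball_zero_iff.2 hz.2⟩

theorem div_norm_mul_tanh_artanh_norm {z : ℂ} (hz : z ∈ 𝔻) (hz0 : z ≠ 0) :
    z / ‖z‖ * Real.tanh (Real.artanh ‖z‖) = z := by
  rw [Real.tanh_artanh ⟨by linarith [norm_nonneg z], mem_ball_zero_iff.1 hz⟩,
    div_mul_cancel₀ _ (by exact_mod_cast norm_ne_zero_iff.2 hz0)]

variable {f : ℂ → ℂ}

theorem exists_forall_sphere_inv_one_sub_norm_sq_le (hf : DifferentiableOn ℂ f 𝔻)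
    (hmaps : MapsTo f 𝔻 𝔻) {r : ℝ} (hr : r < 1) :
    ∃ M, ∀ z ∈ sphere (0 : ℂ) r, (1 - ‖f z‖ ^ 2)⁻¹ ≤ M := by
  have hsub : sphere (0 : ℂ) r ⊆ 𝔻 := sphere_subset_closedBall.trans (closedBall_subset_ball hr)
  have hcont : ContinuousOn (fun z => (1 - ‖f z‖ ^ 2)⁻¹) (sphere 0 r) :=
    (continuousOn_const.sub ((hf.continuousOn.mono hsub).norm.pow 2)).inv₀
      fun z hz => (one_sub_norm_sq_pos (hmaps (hsub hz))).ne'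
  exact ((isCompact_sphere 0 r).exists_bound_of_continuousOn hcont).imp
    fun M hM z hz => (le_abs_self _).trans (hM z hz)

theorem exists_quadratic_artanh_le_inv_one_sub_norm_sq (hf : DifferentiableOn ℂ f 𝔻)
    (hmaps : MapsTo f 𝔻 𝔻) {c : ℝ} (hc : 1 / 2 < c)
    (h : ∀ᶠ z in atUnitCircle, c ≤ hyperbolicDeriv f z ^ 2) :
    ∃ M t₀ : ℝ, ∀ᶠ z in atUnitCircle,
      (Real.artanh ‖z‖ - t₀) * ((c - 1 / 2) * (Real.artanh ‖z‖ - t₀) - 2 * M) ≤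
        (1 - ‖f z‖ ^ 2)⁻¹ := by
  obtain ⟨r, hr, hcr⟩ := hasBasis_atUnitCircle.eventually_iff.1 h
  obtain ⟨r₀, hr₀, hr₀1⟩ := exists_between (max_lt hr one_pos)
  obtain ⟨hrr₀, hr₀0⟩ := max_lt_iff.1 hr₀
  obtain ⟨M, hM⟩ := exists_forall_sphere_inv_one_sub_norm_sq_le hf hmaps hr₀1
  set t₀ := Real.artanh r₀
  have htanh : Real.tanh t₀ = r₀ := Real.tanh_artanh ⟨by linarith, hr₀1⟩
  refine ⟨M, t₀, hasBasis_atUnitCircle.eventually_iff.2 ⟨r₀, hr₀1, fun z ⟨hz, hz1⟩ => ?_⟩⟩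
  have hz0 : z ≠ 0 := norm_pos_iff.1 (hr₀0.trans hz)
  have hζ : ‖z / ‖z‖‖ = 1 := by simp [hz0]
  have ht : t₀ ≤ Real.artanh ‖z‖ := Real.artanh_le_artanh (by linarith) hz1 hz.le
  have hgrowth := quadratic_le_inv_one_sub_norm_sq_comp_mul_tanh hf hmaps hc hζ (fun s hs =>
    hcr ⟨hrr₀.trans_le ?_, mem_ball_zero_iff.1 (mul_tanh_mem_unitDisk hζ s)⟩) ht
  · rw [div_norm_mul_tanh_artanh_norm (mem_ball_zero_iff.2 hz1) hz0] at hgrowth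
    have hy_le := hM (z / ‖z‖ * Real.tanh t₀) (by
      rw [mem_sphere_zero_iff_norm, norm_mul_tanh hζ, htanh, abs_of_pos hr₀0])
    have hy_pos := inv_pos.2 (one_sub_norm_sq_pos (hmaps (mul_tanh_mem_unitDisk hζ t₀)))
    nlinarith [mul_le_mul_of_nonneg_right hy_le (sub_nonneg.2 ht)]
  · beta_reduce
    rw [norm_mul_tanh hζ, ← htanh]
    exact (monotone_tanh hs).trans (le_abs_self _)

theorem tendsto_norm_of_half_lt_hyperbolicDeriv_sq (hf : DifferentiableOn ℂ f 𝔻)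
    (hmaps : MapsTo f 𝔻 𝔻) {c : ℝ} (hc : 1 / 2 < c)
    (h : ∀ᶠ z in atUnitCircle, c ≤ hyperbolicDeriv f z ^ 2) :
    Tendsto (fun z => ‖f z‖) atUnitCircle (𝓝 1) := by
  obtain ⟨M, t₀, hM⟩ := exists_quadratic_artanh_le_inv_one_sub_norm_sq hf hmaps hc h
  have hτ : Tendsto (fun z : ℂ => Real.artanh ‖z‖ - t₀) atUnitCircle atTop :=
    tendsto_atTop_add_const_right _ _ (tendsto_artanh_atTop.comp tendsto_comap)
  have hinv : Tendsto (fun z => (1 - ‖f z‖ ^ 2)⁻¹) atUnitCircle atTop :=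
    tendsto_atTop_mono' _ hM <| hτ.atTop_mul_atTop₀ <|
      tendsto_atTop_add_const_right _ _ (hτ.const_mul_atTop (sub_pos.2 hc))
  have hsq : Tendsto (fun z => √(1 - (1 - ‖f z‖ ^ 2)⁻¹⁻¹)) atUnitCircle (𝓝 1) := by
    simpa using (hinv.inv_tendsto_atTop.const_sub 1).sqrt
  simpa using hsq

end Boundary

section FiniteBlaschkeProduct

variable {f : ℂ → ℂ}

theorem tendsto_norm_blaschkeFactor {a : ℂ} (ha : a ∈ 𝔻) :
    Tendsto (fun z => ‖blaschkeFactor a z‖) atUnitCircle (𝓝 1) := by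
  have hnorm : Tendsto (fun z : ℂ => ‖z‖) atUnitCircle (𝓝 1) :=
    tendsto_comap.mono_right nhdsWithin_le_nhds
  have ha1 : 0 < 1 - ‖a‖ := sub_pos.2 (mem_ball_zero_iff.1 ha)
  have hupper : Tendsto (fun z : ℂ => (1 - ‖a‖ ^ 2) * (1 - ‖z‖ ^ 2) / (1 - ‖a‖) ^ 2)
      atUnitCircle (𝓝 0) := by
    simpa using (((hnorm.pow 2).const_sub 1).const_mul (1 - ‖a‖ ^ 2)).div_const ((1 - ‖a‖) ^ 2)
  have hdefect : Tendsto (fun z => 1 - ‖blaschkeFactor a z‖ ^ 2) atUnitCircle (𝓝 0) := by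
    refine tendsto_of_tendsto_of_tendsto_of_le_of_le' tendsto_const_nhds hupper ?_ ?_ <;>
      filter_upwards [eventually_mem_unitDisk] with z hz
    · exact (one_sub_norm_sq_pos (mapsTo_blaschkeFactor ha hz)).le
    · have := one_sub_norm_sq_pos ha
      have := one_sub_norm_sq_pos hz
      rw [one_sub_norm_sq_blaschkeFactor (one_sub_conj_mul_ne_zero ha hz)]
      gcongr
      exact one_sub_norm_le_norm_one_sub_conj_mul hz
  have hsqrt : Tendsto (fun z => √(1 - (1 - ‖blaschkeFactor a z‖ ^ 2))) atUnitCircle (𝓝 1) := by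
    simpa using (hdefect.const_sub 1).sqrt
  simpa using hsqrt

theorem mapsTo_closedBall_of_tendsto_norm (hf : DifferentiableOn ℂ f 𝔻)
    (hlim : Tendsto (fun z => ‖f z‖) atUnitCircle (𝓝 1)) : MapsTo f 𝔻 (closedBall 0 1) := by
  intro z hz
  rw [mem_closedBall_zero_iff]
  refine le_of_forall_pos_le_add fun ε hε => ?_
  obtain ⟨r, hr, hrε⟩ := hasBasis_atUnitCircle.eventually_iff.1
    (hlim.eventually_le_const (lt_add_of_pos_right 1 hε))
  obtain ⟨R, hR, hR1⟩ := exists_between (max_lt hr (mem_ball_zero_iff.1 hz))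
  obtain ⟨hrR, hzR⟩ := max_lt_iff.1 hR
  have hR0 : R ≠ 0 := ((norm_nonneg z).trans_lt hzR).ne'
  refine Complex.norm_le_of_forall_mem_frontier_norm_le (U := ball 0 R) isBounded_ball
    (hf.diffContOnCl_ball (closedBall_subset_ball hR1)) (fun w hw => ?_)
    (subset_closure (mem_ball_zero_iff.2 hzR))
  rw [frontier_ball _ hR0, mem_sphere_zero_iff_norm] at hw
  exact hrε ⟨hrR.trans_eq hw.symm, hw.trans_lt hR1⟩

theorem exists_eqOn_const_of_tendsto_norm (hf : DifferentiableOn ℂ f 𝔻)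
    (hlim : Tendsto (fun z => ‖f z‖) atUnitCircle (𝓝 1)) (hne : ∀ z ∈ 𝔻, f z ≠ 0) :
    ∃ η : ℂ, ‖η‖ = 1 ∧ EqOn f (fun _ => η) 𝔻 := by
  have h0 : (0 : ℂ) ∈ 𝔻 := mem_ball_self one_pos
  have hle := mapsTo_closedBall_of_tendsto_norm hf hlim
  have hinv_le := mapsTo_closedBall_of_tendsto_norm (hf.inv hne)
    (by simpa using hlim.inv₀ one_ne_zero)
  have hnorm : ‖f 0‖ = 1 := by
    refine (mem_closedBall_zero_iff.1 (hle h0)).antisymm ?_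
    have := mem_closedBall_zero_iff.1 (hinv_le h0)
    rw [Pi.inv_apply, norm_inv] at this
    exact (inv_le_one₀ (norm_pos_iff.2 (hne 0 h0))).1 this
  obtain ⟨C, hC⟩ | hmaps := eqOn_const_or_mapsTo_unitDisk hf hle
  · exact ⟨C, by rw [← hnorm, hC h0], hC⟩
  · exact absurd hnorm (mem_ball_zero_iff.1 (hmaps h0)).ne

/-- `f` agrees on the unit disk with a finite Blaschke product of degree `n`; its values elsewhere
are unconstrained. -/
def IsFiniteBlaschkeProduct (n : ℕ) (f : ℂ → ℂ) : Prop :=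
  ∃ (η : ℂ) (a : Fin n → ℂ), ‖η‖ = 1 ∧ (∀ j, ‖a j‖ < 1) ∧
    ∀ z ∈ 𝔻, f z = η * ∏ j, blaschkeFactor (a j) z

theorem isFiniteBlaschkeProduct_zero_iff :
    IsFiniteBlaschkeProduct 0 f ↔ ∃ η : ℂ, ‖η‖ = 1 ∧ EqOn f (fun _ => η) 𝔻 := by
  simp [IsFiniteBlaschkeProduct, EqOn]

theorem IsFiniteBlaschkeProduct.of_eqOn_blaschkeFactor_mul {n : ℕ} {g : ℂ → ℂ}
    (hg : IsFiniteBlaschkeProduct n g) {a : ℂ} (ha : a ∈ 𝔻)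
    (hfg : ∀ z ∈ 𝔻, f z = blaschkeFactor a z * g z) : IsFiniteBlaschkeProduct (n + 1) f := by
  obtain ⟨η, b, hη, hb, hgb⟩ := hg
  refine ⟨η, Fin.cons a b, hη, Fin.cases (mem_ball_zero_iff.1 ha) hb, fun z hz => ?_⟩
  rw [hfg z hz, hgb z hz, Fin.prod_univ_succ]
  simp only [Fin.cons_zero, Fin.cons_succ]
  ring

theorem exists_eq_blaschkeFactor_mul (hf : DifferentiableOn ℂ f 𝔻)
    (hlim : Tendsto (fun z => ‖f z‖) atUnitCircle (𝓝 1)) {a : ℂ} (ha : a ∈ 𝔻) (hfa : f a = 0) :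
    ∃ g : ℂ → ℂ, DifferentiableOn ℂ g 𝔻 ∧ Tendsto (fun z => ‖g z‖) atUnitCircle (𝓝 1) ∧
      ∀ z ∈ 𝔻, f z = blaschkeFactor a z * g z := by
  set g : ℂ → ℂ := fun z => -(dslope f a z * (1 - conj a * z)) with hg
  have hfg : ∀ z ∈ 𝔻, f z = blaschkeFactor a z * g z := fun z hz => by
    have hslope : (z - a) * dslope f a z = f z := by simpa [hfa] using sub_smul_dslope f a z
    rw [← hslope, blaschkeFactor, div_mul_eq_mul_div,
      eq_div_iff (one_sub_conj_mul_ne_zero ha hz), hg]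
    ring
  have hgd : DifferentiableOn ℂ g 𝔻 :=
    (((Complex.differentiableOn_dslope (isOpen_ball.mem_nhds ha)).2 hf).mul (by fun_prop)).neg
  refine ⟨g, hgd, ?_, hfg⟩
  have hB := tendsto_norm_blaschkeFactor ha
  rw [← div_one (1 : ℝ)]
  refine (hlim.div hB one_ne_zero).congr' ?_
  filter_upwards [eventually_mem_unitDisk, hB.eventually_ne one_ne_zero] with z hz hBz
  rw [Pi.div_apply, hfg z hz, norm_mul, mul_div_cancel_left₀ _ hBz]

theorem exists_isFiniteBlaschkeProduct_of_pow_lt {s : Set ℂ} {p : ℂ} {ρ : ℝ} (hp : p ∈ 𝔻)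
    (hρ : ∀ a ∈ s, ‖blaschkeFactor a p‖ ≤ ρ) (N : ℕ) (hf : DifferentiableOn ℂ f 𝔻)
    (hlim : Tendsto (fun z => ‖f z‖) atUnitCircle (𝓝 1))
    (hzeros : ∀ a ∈ 𝔻, f a = 0 → a ∈ s) (hpow : ρ ^ N < ‖f p‖) :
    ∃ n, IsFiniteBlaschkeProduct n f := by
  induction N generalizing f with
  | zero =>
    have := mapsTo_closedBall_of_tendsto_norm hf hlim hp
    rw [mem_closedBall_zero_iff] at this
    exact absurd hpow (by simpa using this)
  | succ N ih =>
    by_cases! hne : ∀ z ∈ 𝔻, f z ≠ 0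
    · exact ⟨0, isFiniteBlaschkeProduct_zero_iff.2 (exists_eqOn_const_of_tendsto_norm hf hlim hne)⟩
    · obtain ⟨a, ha, hfa⟩ := hne
      obtain ⟨g, hg, hglim, hfg⟩ := exists_eq_blaschkeFactor_mul hf hlim ha hfa
      have hBρ : ‖blaschkeFactor a p‖ ≤ ρ := hρ a (hzeros a ha hfa)
      have hρ0 : 0 ≤ ρ := (norm_nonneg _).trans hBρ
      have hgpow : ρ ^ N < ‖g p‖ := by
        rw [hfg p hp, norm_mul, pow_succ'] at hpow
        exact lt_of_mul_lt_mul_left (hpow.trans_le (by gcongr)) hρ0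
      obtain ⟨n, hn⟩ := ih hg hglim (fun b hb hgb => hzeros b hb (by rw [hfg b hb, hgb, mul_zero]))
        hgpow
      exact ⟨n + 1, hn.of_eqOn_blaschkeFactor_mul ha hfg⟩

theorem exists_isFiniteBlaschkeProduct_of_tendsto_norm (hf : DifferentiableOn ℂ f 𝔻)
    (hlim : Tendsto (fun z => ‖f z‖) atUnitCircle (𝓝 1)) : ∃ n, IsFiniteBlaschkeProduct n f := by
  obtain ⟨r, hr, hne⟩ := hasBasis_atUnitCircle.eventually_iff.1 (hlim.eventually_ne one_ne_zero)
  have hzeros (a : ℂ) (ha : a ∈ 𝔻) (hfa : f a = 0) : a ∈ closedBall 0 r := by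
    rw [mem_closedBall_zero_iff]
    by_contra! hra
    exact hne ⟨hra, mem_ball_zero_iff.1 ha⟩ (by rw [hfa, norm_zero])
  obtain ⟨p, ⟨hp, hfp⟩⟩ := (eventually_mem_unitDisk.and (hlim.eventually_ne one_ne_zero)).exists
  have hsub : closedBall (0 : ℂ) r ⊆ 𝔻 := closedBall_subset_ball hr
  have hcont : ContinuousOn (fun a => ‖blaschkeFactor a p‖) (closedBall 0 r) := by
    refine ContinuousOn.norm (ContinuousOn.div (by fun_prop) ?_ fun a ha =>
      one_sub_conj_mul_ne_zero (hsub ha) hp)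
    exact (continuous_const.sub (Complex.continuous_conj.mul continuous_const)).continuousOn
  obtain ⟨ρ, hρ1, hρ⟩ : ∃ ρ < 1, ∀ a ∈ closedBall 0 r, ‖blaschkeFactor a p‖ ≤ ρ := by
    obtain hempty | hnonempty := (closedBall (0 : ℂ) r).eq_empty_or_nonempty
    · exact ⟨0, one_pos, by simp [hempty]⟩
    · obtain ⟨a, ha, hmax⟩ := (isCompact_closedBall 0 r).exists_isMaxOn hnonempty hcont
      exact ⟨_, mem_ball_zero_iff.1 (mapsTo_blaschkeFactor (hsub ha) hp), hmax⟩
  obtain ⟨N, hN⟩ := exists_pow_lt_of_lt_one ((norm_nonneg (f p)).lt_of_ne' hfp) hρ1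
  exact exists_isFiniteBlaschkeProduct_of_pow_lt hp hρ N hf hlim hzeros hN

end FiniteBlaschkeProduct

theorem heins_characterization_general {f : ℂ → ℂ} (hf : DifferentiableOn ℂ f 𝔻)
    (hmaps : MapsTo f 𝔻 𝔻) {c : ℝ} (hc : 1 / 2 < c)
    (h : ∀ᶠ z in atUnitCircle, c ≤ hyperbolicDeriv f z ^ 2) :
    ∃ n, 1 ≤ n ∧ IsFiniteBlaschkeProduct n f := by
  obtain ⟨n, hn⟩ := exists_isFiniteBlaschkeProduct_of_tendsto_norm hf
    (tendsto_norm_of_half_lt_hyperbolicDeriv_sq hf hmaps hc h)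
  refine ⟨n, Nat.one_le_iff_ne_zero.2 ?_, hn⟩
  rintro rfl
  obtain ⟨η, hη, hfη⟩ := isFiniteBlaschkeProduct_zero_iff.1 hn
  have h0 : (0 : ℂ) ∈ 𝔻 := mem_ball_self one_pos
  exact (mem_ball_zero_iff.1 (hmaps h0)).ne ((congrArg norm (hfη h0)).trans hη)

/-- **Heins' characterization of finite Blaschke products.** If `f` is a nonconstant
holomorphic function from the open unit disk into the closed unit disk such that
`(1 − |z|²)|f'(z)|/(1 − |f(z)|²) → 1` as `|z| → 1⁻`, then `f` is a finite Blaschke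
product: `f(z) = η ∏_{j=1}^n (z_j − z)/(1 − conj z_j · z)` for some `n ≥ 1`,
`|η| = 1` and points `z_j` in the open unit disk. -/
theorem heins_characterization (f : ℂ → ℂ)
    (hf_diff : ∀ z ∈ Metric.ball (0 : ℂ) 1, DifferentiableAt ℂ f z)
    (hf_le : ∀ z ∈ Metric.ball (0 : ℂ) 1, ‖f z‖ ≤ 1)
    (hf_nc : ∃ z ∈ Metric.ball (0 : ℂ) 1, ∃ w ∈ Metric.ball (0 : ℂ) 1, f z ≠ f w)
    (hlim : Tendsto (fun z : ℂ => (1 - ‖z‖ ^ 2) * ‖deriv f z‖ / (1 - ‖f z‖ ^ 2))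
      (Filter.comap (fun z : ℂ => ‖z‖) (nhdsWithin 1 (Set.Iio 1))) (nhds 1)) :
    ∃ (n : ℕ) (η : ℂ) (a : Fin n → ℂ), 1 ≤ n ∧ ‖η‖ = 1 ∧ (∀ j, ‖a j‖ < 1) ∧
      ∀ z ∈ Metric.ball (0 : ℂ) 1,
        f z = η * ∏ j, (a j - z) / (1 - (starRingEnd ℂ) (a j) * z) := by
  have hf : DifferentiableOn ℂ f 𝔻 := fun z hz => (hf_diff z hz).differentiableWithinAt
  have hmaps : MapsTo f 𝔻 𝔻 :=
    mapsTo_unitDisk_of_nonconst hf (fun z hz => mem_closedBall_zero_iff.2 (hf_le z hz)) hf_nc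
  obtain ⟨n, hn, η, a, hη, ha, hfa⟩ := heins_characterization_general hf hmaps (c := 3 / 4)
    (by norm_num) ((hlim.pow 2).eventually_const_le (by norm_num))
  exact ⟨n, η, a, hn, hη, ha, hfa⟩
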